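/- Fix d > 0. Then for all p, q, π ∈ (0,1), ((2p−1)q − (q + p − 1)(2p − 1)π − p + 1 + 2d) / ((2q−1)(q + p − 1)π + 2q(1−q) + 2d) ≤ (1 + 2d)/(2d). Consequently, the robust Matthews correlation coefficient M_MCCrb satisfies the robustness condition (12) with constant c₂ = (1+2d)/(2d), i.e. its ratio of partial derivatives ∂_q M_MCCrb / ∂_p M_MCCrb is bounded by (1+2d)/(2d) for all π ∈ (0,1/2] and p, q ∈ (0,1). -/

import Mathlib

/-!
The two partial derivatives of the robust MCC share a positive factor, so their ratio is a ratio
of polynomials. On the unit cube, `1 + 2 * d` minus the numerator and the denominator minus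
`2 * d` are both convex combinations, with weights `1 - π` and `π`, of nonnegative terms.
-/

open Set

/-- The variance `r * (1 - r)` of the predicted label, where `r = π * p + (1 - π) * (1 - q)` is the
probability of predicting the positive class. The factor `1 - r` is written as in the usual
formula for the MCC. -/
def predictionVariance (p q π : ℝ) : ℝ :=
  (π * p + (1 - π) * (1 - q)) * (π * (1 - p) + (1 - π) * q)

/-- The robust Matthews correlation coefficient with parameter `d`, as a function of the
sensitivity `p`, the specificity `q` and the proportion `π` of the positive class. -/
noncomputable def robustMCC (d p q π : ℝ) : ℝ :=
  √(d + π * (1 - π)) * (p * q - (1 - p) * (1 - q)) / √(d + predictionVariance p q π)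

/-- The quotient of `∂_p robustMCC` by the factor `√(d + π * (1 - π)) / (2 * v * √v)`, common to
both partial derivatives, where `v = d + predictionVariance p q π`. -/
def sensitivitySlope (d p q π : ℝ) : ℝ :=
  (2 * q - 1) * (q + p - 1) * π + 2 * q * (1 - q) + 2 * d

/-- The quotient of `∂_q robustMCC` by the factor `√(d + π * (1 - π)) / (2 * v * √v)`, common to
both partial derivatives, where `v = d + predictionVariance p q π`. -/
def specificitySlope (d p q π : ℝ) : ℝ :=
  (2 * p - 1) * q - (q + p - 1) * (2 * p - 1) * π - p + 1 + 2 * d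

theorem hasDerivAt_div_sqrt {f g : ℝ → ℝ} {f' g' x : ℝ} (hf : HasDerivAt f f' x)
    (hg : HasDerivAt g g' x) (hpos : 0 < g x) :
    HasDerivAt (fun y => f y / √(g y)) ((2 * g x * f' - f x * g') / (2 * g x * √(g x))) x := by
  have hsqrt : √(g x) ≠ 0 := (Real.sqrt_pos.mpr hpos).ne'
  have hsq : √(g x) ^ 2 = g x := Real.sq_sqrt hpos.le
  refine (hf.div (hg.sqrt hpos.ne') hsqrt).congr_deriv ?_
  rw [hsq]
  field_simp
  rw [hsq]
  ring

section PartialDerivatives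

variable {d p q π : ℝ}

theorem hasDerivAt_predictionVariance_sensitivity :
    HasDerivAt (fun p' => predictionVariance p' q π)
      (π * (π * (1 - p) + (1 - π) * q - (π * p + (1 - π) * (1 - q)))) p := by
  have hpos := ((hasDerivAt_id' p).const_mul π).add_const ((1 - π) * (1 - q))
  have hneg := (((hasDerivAt_id' p).const_sub 1).const_mul π).add_const ((1 - π) * q)
  exact (hpos.mul hneg).congr_deriv (by ring)

theorem hasDerivAt_predictionVariance_specificity :
    HasDerivAt (fun q' => predictionVariance p q' π)
      ((1 - π) * (π * p + (1 - π) * (1 - q) - (π * (1 - p) + (1 - π) * q))) q := by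
  have hpos := (((hasDerivAt_id' q).const_sub 1).const_mul (1 - π)).const_add (π * p)
  have hneg := ((hasDerivAt_id' q).const_mul (1 - π)).const_add (π * (1 - p))
  exact (hpos.mul hneg).congr_deriv (by ring)

theorem hasDerivAt_robustMCC_sensitivity (hvar : 0 < d + predictionVariance p q π) :
    HasDerivAt (fun p' => robustMCC d p' q π)
      (√(d + π * (1 - π)) / (2 * (d + predictionVariance p q π) * √(d + predictionVariance p q π)) *
        sensitivitySlope d p q π) p := by
  have hnum := (((hasDerivAt_id' p).mul_const q).sub
    (((hasDerivAt_id' p).const_sub 1).mul_const (1 - q))).const_mul √(d + π * (1 - π))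
  refine (hasDerivAt_div_sqrt hnum
    (hasDerivAt_predictionVariance_sensitivity.const_add d) hvar).congr_deriv ?_
  rw [div_mul_eq_mul_div]
  congr 1
  simp only [Pi.sub_apply, predictionVariance, sensitivitySlope]
  ring

theorem hasDerivAt_robustMCC_specificity (hvar : 0 < d + predictionVariance p q π) :
    HasDerivAt (fun q' => robustMCC d p q' π)
      (√(d + π * (1 - π)) / (2 * (d + predictionVariance p q π) * √(d + predictionVariance p q π)) *
        specificitySlope d p q π) q := by
  have hnum := (((hasDerivAt_id' q).const_mul p).sub
    (((hasDerivAt_id' q).const_sub 1).const_mul (1 - p))).const_mul √(d + π * (1 - π))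
  refine (hasDerivAt_div_sqrt hnum
    (hasDerivAt_predictionVariance_specificity.const_add d) hvar).congr_deriv ?_
  rw [div_mul_eq_mul_div]
  congr 1
  simp only [Pi.sub_apply, predictionVariance, specificitySlope]
  ring

theorem deriv_robustMCC_div_deriv_robustMCC (hclass : 0 < d + π * (1 - π))
    (hvar : 0 < d + predictionVariance p q π) :
    deriv (fun q' => robustMCC d p q' π) q / deriv (fun p' => robustMCC d p' q π) p =
      specificitySlope d p q π / sensitivitySlope d p q π := by
  rw [(hasDerivAt_robustMCC_specificity hvar).deriv, (hasDerivAt_robustMCC_sensitivity hvar).deriv]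
  exact mul_div_mul_left _ _ (by positivity)

end PartialDerivatives

section UnitCube

variable {d p q π : ℝ}

theorem predictionVariance_nonneg (hp : p ∈ Icc (0 : ℝ) 1) (hq : q ∈ Icc (0 : ℝ) 1)
    (hπ : π ∈ Icc (0 : ℝ) 1) : 0 ≤ predictionVariance p q π := by
  obtain ⟨hp₀, hp₁⟩ := hp
  obtain ⟨hq₀, hq₁⟩ := hq
  obtain ⟨hπ₀, hπ₁⟩ := hπ
  rw [← sub_nonneg] at hp₁ hq₁ hπ₁
  unfold predictionVariance
  positivity

theorem two_mul_le_sensitivitySlope (hp : p ∈ Icc (0 : ℝ) 1) (hq : q ∈ Icc (0 : ℝ) 1)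
    (hπ : π ∈ Icc (0 : ℝ) 1) : 2 * d ≤ sensitivitySlope d p q π := by
  obtain ⟨hp₀, hp₁⟩ := hp
  obtain ⟨hq₀, hq₁⟩ := hq
  obtain ⟨hπ₀, hπ₁⟩ := hπ
  rw [← sub_nonneg] at hp₁ hq₁ hπ₁
  have hexcess : sensitivitySlope d p q π - 2 * d =
      (1 - π) * (2 * q * (1 - q)) + π * (p * q + (1 - p) * (1 - q)) := by
    unfold sensitivitySlope
    ring
  rw [← sub_nonneg, hexcess]
  positivity

theorem specificitySlope_le (hp : p ∈ Icc (0 : ℝ) 1) (hq : q ∈ Icc (0 : ℝ) 1)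
    (hπ : π ∈ Icc (0 : ℝ) 1) : specificitySlope d p q π ≤ 1 + 2 * d := by
  obtain ⟨hp₀, hp₁⟩ := hp
  obtain ⟨hq₀, hq₁⟩ := hq
  obtain ⟨hπ₀, hπ₁⟩ := hπ
  rw [← sub_nonneg] at hp₁ hq₁ hπ₁
  have hdeficit : 1 + 2 * d - specificitySlope d p q π =
      (1 - π) * (p * (1 - q) + (1 - p) * q) + π * (p ^ 2 + (1 - p) ^ 2) := by
    unfold specificitySlope
    ring
  rw [← sub_nonneg, hdeficit]
  positivity

theorem specificitySlope_div_sensitivitySlope_le (hd : 0 < d) (hp : p ∈ Icc (0 : ℝ) 1)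
    (hq : q ∈ Icc (0 : ℝ) 1) (hπ : π ∈ Icc (0 : ℝ) 1) :
    specificitySlope d p q π / sensitivitySlope d p q π ≤ (1 + 2 * d) / (2 * d) :=
  div_le_div₀ (by positivity) (specificitySlope_le hp hq hπ) (by positivity)
    (two_mul_le_sensitivitySlope hp hq hπ)

end UnitCube

theorem robust_mcc_robustness_general {d : ℝ} (hd : 0 < d) {p q π : ℝ} (hp : p ∈ Icc (0 : ℝ) 1)
    (hq : q ∈ Icc (0 : ℝ) 1) (hπ : π ∈ Icc (0 : ℝ) 1) :
    specificitySlope d p q π / sensitivitySlope d p q π ≤ (1 + 2 * d) / (2 * d) ∧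
      deriv (fun q' => robustMCC d p q' π) q / deriv (fun p' => robustMCC d p' q π) p ≤
        (1 + 2 * d) / (2 * d) := by
  have hclass : 0 < d + π * (1 - π) :=
    add_pos_of_pos_of_nonneg hd (mul_nonneg hπ.1 (sub_nonneg.mpr hπ.2))
  have hvar : 0 < d + predictionVariance p q π :=
    add_pos_of_pos_of_nonneg hd (predictionVariance_nonneg hp hq hπ)
  rw [deriv_robustMCC_div_deriv_robustMCC hclass hvar, and_self]
  exact specificitySlope_div_sensitivitySlope_le hd hp hq hπ

theorem robust_mcc_robustness
    (d : ℝ) (hd : 0 < d)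
    (M : ℝ → ℝ → ℝ → ℝ)
    (hM : ∀ p q π : ℝ, M p q π =
      Real.sqrt (d + π * (1 - π)) * (p * q - (1 - p) * (1 - q)) /
      Real.sqrt (d + (π * p + (1 - π) * (1 - q)) * (π * (1 - p) + (1 - π) * q))) :
    (∀ p q π : ℝ, p ∈ Ioo (0:ℝ) 1 → q ∈ Ioo (0:ℝ) 1 → π ∈ Ioo (0:ℝ) 1 →
      ((2 * p - 1) * q - (q + p - 1) * (2 * p - 1) * π - p + 1 + 2 * d) /
        ((2 * q - 1) * (q + p - 1) * π + 2 * q * (1 - q) + 2 * d)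
        ≤ (1 + 2 * d) / (2 * d)) ∧
    (∀ p q π : ℝ, p ∈ Ioo (0:ℝ) 1 → q ∈ Ioo (0:ℝ) 1 → π ∈ Ioc (0:ℝ) (1/2) →
      deriv (fun q' => M p q' π) q / deriv (fun p' => M p' q π) p
        ≤ (1 + 2 * d) / (2 * d)) := by
  obtain rfl : M = robustMCC d := funext₃ hM
  have hIcc : Ioo (0 : ℝ) 1 ⊆ Icc 0 1 := Ioo_subset_Icc_self
  exact ⟨fun p q π hp hq hπ => (robust_mcc_robustness_general hd (hIcc hp) (hIcc hq) (hIcc hπ)).1,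
    fun p q π hp hq hπ => (robust_mcc_robustness_general hd (hIcc hp) (hIcc hq)
      ⟨hπ.1.le, hπ.2.trans one_half_lt_one.le⟩).2⟩
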